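/- For every natural number n, the partial sums of the central binomial coefficients satisfy: ∑_{k=0}^{n} binomial(2k, k) ≡ (−1)^{δ_3(n)} (mod 3) if n = 3m for some m ∈ T(01), and ∑_{k=0}^{n} binomial(2k, k) ≡ 0 (mod 3) otherwise. -/

import Mathlib

/-- `T(01)`: the natural numbers all of whose base-3 digits are `0` or `1`. -/
def T01 : Set ℕ := {n | ∀ d ∈ Nat.digits 3 n, d = 0 ∨ d = 1}

/-- `δ_3 n`: the number of base-3 digits of `n` equal to `1`. -/
def delta3 (n : ℕ) : ℕ := (Nat.digits 3 n).count 1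

lemma dig3 (q r : ℕ) (hr : r < 3) (h : 0 < 3 * q + r) :
    Nat.digits 3 (3 * q + r) = r :: Nat.digits 3 q := by
  rw [Nat.digits_def' (by norm_num) h]
  congr 1
  · omega
  · congr 1; omega

lemma T01_step (q r : ℕ) (hr : r < 3) : 3 * q + r ∈ T01 ↔ (q ∈ T01 ∧ r ≤ 1) := by
  rcases Nat.eq_zero_or_pos (3 * q + r) with h | h
  · obtain rfl : q = 0 := by omega
    obtain rfl : r = 0 := by omega
    simp [T01]
  · simp only [T01, Set.mem_setOf_eq, dig3 q r hr h, List.mem_cons, forall_eq_or_imp]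
    constructor
    · rintro ⟨a, b⟩; exact ⟨b, by omega⟩
    · rintro ⟨a, b⟩; exact ⟨by omega, a⟩

lemma delta_step (q r : ℕ) (hr : r < 3) :
    delta3 (3 * q + r) = delta3 q + if r = 1 then 1 else 0 := by
  rcases Nat.eq_zero_or_pos (3 * q + r) with h | h
  · obtain rfl : q = 0 := by omega
    obtain rfl : r = 0 := by omega
    simp
  · simp [delta3, dig3 q r hr h, List.count_cons]

lemma c_step (q : ℕ) :
    (((2 * (3 * q)).choose (3 * q) : ℤ) ≡ (2 * q).choose q [ZMOD 3]) ∧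
    (((2 * (3 * q + 1)).choose (3 * q + 1) : ℤ) ≡ - (2 * q).choose q [ZMOD 3]) ∧
    (((2 * (3 * q + 2)).choose (3 * q + 2) : ℤ) ≡ 0 [ZMOD 3]) := by
  haveI : Fact (Nat.Prime 3) := ⟨Nat.prime_three⟩
  refine ⟨?_, ?_, ?_⟩
  · have := @Choose.choose_modEq_choose_mod_mul_choose_div (2 * (3 * q)) (3 * q) 3 _
    rw [show 2 * (3 * q) % 3 = 0 by omega, show 3 * q % 3 = 0 by omega,
      show 2 * (3 * q) / 3 = 2 * q by omega, show 3 * q / 3 = q by omega] at this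
    simpa using this
  · have := @Choose.choose_modEq_choose_mod_mul_choose_div (2 * (3 * q + 1)) (3 * q + 1) 3 _
    rw [show 2 * (3 * q + 1) % 3 = 2 by omega, show (3 * q + 1) % 3 = 1 by omega,
      show 2 * (3 * q + 1) / 3 = 2 * q by omega, show (3 * q + 1) / 3 = q by omega] at this
    simp only [Int.ModEq, Nat.choose_one_right] at this ⊢
    push_cast at this
    omega
  · have := @Choose.choose_modEq_choose_mod_mul_choose_div (2 * (3 * q + 2)) (3 * q + 2) 3 _
    rw [show 2 * (3 * q + 2) % 3 = 1 by omega, show (3 * q + 2) % 3 = 2 by omega] at this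
    simpa using this

lemma c_val (m : ℕ) :
    (m ∈ T01 → ((2 * m).choose m : ℤ) ≡ (-1) ^ delta3 m [ZMOD 3]) ∧
    (m ∉ T01 → ((2 * m).choose m : ℤ) ≡ 0 [ZMOD 3]) := by
  induction m using Nat.strong_induction_on with
  | _ m ih =>
    rcases Nat.eq_zero_or_pos m with rfl | hm
    · simp [T01, delta3]
    obtain ⟨q, r, hr, rfl⟩ : ∃ q r, r < 3 ∧ m = 3 * q + r :=
      ⟨m / 3, m % 3, by omega, by omega⟩
    obtain ⟨i1, i2⟩ := ih q (by omega)
    obtain ⟨c0, c1, c2⟩ := c_step q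
    rw [T01_step q r hr, delta_step q r hr]
    interval_cases r
    · simp only [Nat.add_zero]
      exact ⟨fun h => by simpa using c0.trans (i1 h.1),
        fun h => c0.trans (i2 fun h' => h ⟨h', by omega⟩)⟩
    · refine ⟨fun h => ?_, fun h => ?_⟩
      · have := c1.trans (i1 h.1).neg
        simpa [pow_succ] using this
      · simpa using c1.trans (i2 fun h' => h ⟨h', by omega⟩).neg
    · exact ⟨fun h => absurd h.2 (by omega), fun _ => c2⟩

lemma block (q : ℕ) :
    (∑ k ∈ Finset.range (3 * q), ((2 * k).choose k : ℤ)) ≡ 0 [ZMOD 3] := by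
  induction q with
  | zero => simp
  | succ q ih =>
    obtain ⟨c0, c1, c2⟩ := c_step q
    rw [show 3 * (q + 1) = 3 * q + 1 + 1 + 1 by ring, Finset.sum_range_succ,
      Finset.sum_range_succ, Finset.sum_range_succ]
    simpa using ((ih.add c0).add c1).add c2


/-- Partial sums of central binomial coefficients mod 3:
`∑_{k=0}^n C(2k, k) ≡ (-1)^{δ_3(n)} (mod 3)` if `n = 3m` with `m ∈ T(01)`, and
`∑_{k=0}^n C(2k, k) ≡ 0 (mod 3)` otherwise. -/
theorem sum_centralBinom_mod_three (n : ℕ) :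
    ((∃ m ∈ T01, n = 3 * m) →
      (∑ k ∈ Finset.range (n + 1), ((2 * k).choose k : ℤ)) ≡ (-1) ^ delta3 n [ZMOD 3]) ∧
    (¬ (∃ m ∈ T01, n = 3 * m) →
      (∑ k ∈ Finset.range (n + 1), ((2 * k).choose k : ℤ)) ≡ 0 [ZMOD 3]) := by
  obtain ⟨q, r, hr, rfl⟩ : ∃ q r, r < 3 ∧ n = 3 * q + r :=
    ⟨n / 3, n % 3, by omega, by omega⟩
  obtain ⟨c0, c1, c2⟩ := c_step q
  have b := block q
  have hs : (∃ m ∈ T01, 3 * q + r = 3 * m) ↔ (q ∈ T01 ∧ r = 0) := by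
    constructor
    · rintro ⟨m, hm, h⟩
      obtain rfl : m = q := by omega
      exact ⟨hm, by omega⟩
    · rintro ⟨h, rfl⟩
      exact ⟨q, h, rfl⟩
  rw [hs, delta_step q r hr]
  obtain ⟨v1, v2⟩ := c_val q
  interval_cases r
  · have s : (∑ k ∈ Finset.range (3 * q + 0 + 1), ((2 * k).choose k : ℤ))
        ≡ (2 * q).choose q [ZMOD 3] := by
      rw [Nat.add_zero, Finset.sum_range_succ]
      simpa using b.add c0
    exact ⟨fun h => by simpa using s.trans (v1 h.1), fun h => s.trans (v2 fun h' => h ⟨h', rfl⟩)⟩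
  · refine ⟨fun h => absurd h.2 (by omega), fun _ => ?_⟩
    rw [Finset.sum_range_succ, Finset.sum_range_succ]
    simpa using (b.add c0).add c1
  · refine ⟨fun h => absurd h.2 (by omega), fun _ => ?_⟩
    exact block (q + 1)
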